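/- Let u ∈ H¹_loc be harmonic on Ω ∩ B_1 with u = 0 on B_1 \ Ω (zero extension), and suppose the spherical doubling index satisfies N_u(2^{-k}) ≤ M for all k (with N_u(r) = ⨍_{∂B_r}u² / ⨍_{∂B_{r/4}}u²). Then there exist c > 0 and β > 0 (depending on M, d, and u on B_1) such that ⨍_{B_r} u² ≥ c r^β for all small r > 0; in particular u does not vanish to infinite order at 0. -/

import Mathlib

open MeasureTheory Metric Real
open scoped ENNReal NNReal

noncomputable section

/-- The Euclidean Laplacian of `f : ℝ^d → ℝ` at a point. -/
def lap (d : ℕ) (f : EuclideanSpace ℝ (Fin d) → ℝ) (x : EuclideanSpace ℝ (Fin d)) : ℝ :=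
  ∑ i : Fin d,
    fderiv ℝ (fun y => fderiv ℝ f y (EuclideanSpace.single i 1)) x
      (EuclideanSpace.single i 1)

/-- Average of `f` over the sphere of radius `r` centered at `0`. -/
def sphAvg (d : ℕ) (f : EuclideanSpace ℝ (Fin d) → ℝ) (r : ℝ) : ℝ :=
  ⨍ y in sphere (0 : EuclideanSpace ℝ (Fin d)) r, f y ∂(μH[(d : ℝ) - 1])

/-- Average of `f` over the ball of radius `r` centered at `0`. -/
def ballAvg (d : ℕ) (f : EuclideanSpace ℝ (Fin d) → ℝ) (r : ℝ) : ℝ :=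
  ⨍ y in ball (0 : EuclideanSpace ℝ (Fin d)) r, f y ∂volume


def sphChart {n : ℕ} (i : Fin (n + 1)) (σ r : ℝ) (y : Fin n → ℝ) : EuclideanSpace ℝ (Fin (n + 1)) :=
  WithLp.toLp 2 (i.insertNth (σ * √(r ^ 2 - ∑ j, y j ^ 2)) y : Fin (n + 1) → ℝ)

def sphProj {n : ℕ} (i : Fin (n + 1)) (x : EuclideanSpace ℝ (Fin (n + 1))) : Fin n → ℝ :=
  fun j => x (i.succAbove j)

lemma sphProj_chart {n : ℕ} (i : Fin (n + 1)) (σ r : ℝ) (y : Fin n → ℝ) :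
    sphProj i (sphChart i σ r y) = y := by
  ext j; simp [sphProj, sphChart]

lemma sphChart_mem {n : ℕ} (i : Fin (n + 1)) (σ r : ℝ) (hσ : σ ^ 2 = 1) (hr : 0 < r)
    (y : Fin n → ℝ) (hy : 0 ≤ r ^ 2 - ∑ j, y j ^ 2) :
    sphChart i σ r y ∈ sphere (0 : EuclideanSpace ℝ (Fin (n + 1))) r := by
  rw [mem_sphere_zero_iff_norm, ← sq_eq_sq₀ (norm_nonneg _) hr.le, EuclideanSpace.norm_sq_eq,
    Fin.sum_univ_succAbove _ i]
  simp [sphChart, mul_pow, hσ, Real.sq_sqrt hy]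

lemma sph_sum {n : ℕ} (i : Fin (n + 1)) (r : ℝ) (hr : 0 < r)
    (x : EuclideanSpace ℝ (Fin (n + 1))) (hx : x ∈ sphere (0 : EuclideanSpace ℝ (Fin (n + 1))) r) :
    r ^ 2 - ∑ j, sphProj i x j ^ 2 = x i ^ 2 := by
  rw [mem_sphere_zero_iff_norm] at hx
  have := EuclideanSpace.norm_sq_eq x
  rw [hx, Fin.sum_univ_succAbove _ i] at this
  simp only [Real.norm_eq_abs, sq_abs] at this
  simp [sphProj, this]

lemma sphChart_proj {n : ℕ} (i : Fin (n + 1)) (σ r : ℝ) (hσ : σ ^ 2 = 1) (hr : 0 < r)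
    (x : EuclideanSpace ℝ (Fin (n + 1))) (hx : x ∈ sphere (0 : EuclideanSpace ℝ (Fin (n + 1))) r)
    (h : 0 < σ * x i) : sphChart i σ r (sphProj i x) = x := by
  have hs : σ * √(x i ^ 2) = x i := by
    have : x i ^ 2 = (σ * x i) ^ 2 := by rw [mul_pow, hσ, one_mul]
    rw [this, Real.sqrt_sq h.le, ← mul_assoc, ← sq, hσ, one_mul]
  ext k
  rw [sphChart, sph_sum i r hr x hx, hs]
  refine Fin.succAboveCases i ?_ (fun j => ?_) k
  · simp
  · simp [sphProj]

lemma sphChart_contDiffAt {n : ℕ} (i : Fin (n + 1)) (σ r : ℝ) (y : Fin n → ℝ)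
    (hy : 0 < r ^ 2 - ∑ j, y j ^ 2) : ContDiffAt ℝ 1 (sphChart i σ r) y := by
  rw [contDiffAt_euclidean]
  intro k
  refine Fin.succAboveCases i ?_ (fun j => ?_) k
  · simp only [sphChart, Fin.insertNth_apply_same]
    refine contDiffAt_const.mul (ContDiffAt.sqrt ?_ hy.ne')
    fun_prop
  · simp only [sphChart, Fin.insertNth_apply_succAbove]
    fun_prop

lemma sphProj_continuous {n : ℕ} (i : Fin (n + 1)) : Continuous (sphProj i) := by
  unfold sphProj; fun_prop

lemma sphProj_lip {n : ℕ} (i : Fin (n + 1)) : LipschitzWith 1 (sphProj i) := by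
  refine LipschitzWith.of_dist_le_mul fun x y => ?_
  rw [NNReal.coe_one, one_mul, dist_pi_le_iff dist_nonneg]
  intro j
  have := PiLp.norm_apply_le (x - y) (i.succAbove j)
  simpa [sphProj, dist_eq_norm] using this

lemma exists_sign {n : ℕ} (r : ℝ) (hr : 0 < r) (x : EuclideanSpace ℝ (Fin (n + 1)))
    (hx : x ∈ sphere (0 : EuclideanSpace ℝ (Fin (n + 1))) r) :
    ∃ i : Fin (n + 1), ∃ σ : ℝ, σ ^ 2 = 1 ∧ 0 < σ * x i := by
  have : ∃ i, x i ≠ 0 := by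
    by_contra! h
    have h0 : x = 0 := by ext i; simp [h]
    rw [mem_sphere_zero_iff_norm, h0, norm_zero] at hx
    exact hr.ne hx
  obtain ⟨i, hi⟩ := this
  rcases lt_or_gt_of_ne hi with h | h
  · exact ⟨i, -1, by norm_num, by linarith⟩
  · exact ⟨i, 1, by norm_num, by linarith⟩

lemma sphere_finite (n : ℕ) (r : ℝ) (hr : 0 < r) :
    (μH[(n : ℝ)] : Measure (EuclideanSpace ℝ (Fin (n + 1)))) (sphere 0 r) < ⊤ := by
  refine (isCompact_sphere _ _).measure_lt_top_of_nhdsWithin fun x hx => ?_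
  obtain ⟨i, σ, hσ, hi⟩ := exists_sign r hr x hx
  have hpos : 0 < r ^ 2 - ∑ j, sphProj i x j ^ 2 := by
    rw [sph_sum i r hr x hx]
    have : x i ≠ 0 := by rintro h; simp [h] at hi
    positivity
  obtain ⟨K, t, ht, hL⟩ := (sphChart_contDiffAt i σ r _ hpos).exists_lipschitzOnWith
  set t' := t ∩ closedBall (sphProj i x) 1
  have ht' : t' ∈ nhds (sphProj i x) := Filter.inter_mem ht (closedBall_mem_nhds _ one_pos)
  refine ⟨sphChart i σ r '' t', ?_, ?_⟩
  · have h1 : sphProj i ⁻¹' t' ∈ nhds x := (sphProj_continuous i).continuousAt ht'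
    have h2 : {z : EuclideanSpace ℝ (Fin (n + 1)) | 0 < σ * z i} ∈ nhds x := by
      refine IsOpen.mem_nhds ?_ hi
      exact isOpen_lt continuous_const (by fun_prop)
    filter_upwards [nhdsWithin_le_nhds h1, nhdsWithin_le_nhds h2, self_mem_nhdsWithin] with z h1 h2 h3
    exact ⟨sphProj i z, h1, sphChart_proj i σ r hσ hr z h3 h2⟩
  · refine ((hL.mono Set.inter_subset_left).hausdorffMeasure_image_le (Nat.cast_nonneg n)).trans_lt ?_
    have := hausdorffMeasure_pi_real (ι := Fin n)
    rw [Fintype.card_fin] at this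
    rw [this]
    refine ENNReal.mul_lt_top (by simp) ?_
    exact (measure_mono Set.inter_subset_right).trans_lt (measure_closedBall_lt_top)

lemma sphere_pos (n : ℕ) (r : ℝ) (hr : 0 < r) (x : EuclideanSpace ℝ (Fin (n + 1)))
    (hx : x ∈ sphere (0 : EuclideanSpace ℝ (Fin (n + 1))) r)
    (N : Set (EuclideanSpace ℝ (Fin (n + 1)))) (hN : N ∈ nhds x) :
    0 < (μH[(n : ℝ)] : Measure (EuclideanSpace ℝ (Fin (n + 1)))) (N ∩ sphere 0 r) := by
  obtain ⟨i, σ, hσ, hi⟩ := exists_sign r hr x hx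
  have hpos : 0 < r ^ 2 - ∑ j, sphProj i x j ^ 2 := by
    rw [sph_sum i r hr x hx]
    have : x i ≠ 0 := by rintro h; simp [h] at hi
    positivity
  have hc := (sphChart_contDiffAt i σ r _ hpos).continuousAt
  have h1 : sphChart i σ r ⁻¹' N ∈ nhds (sphProj i x) := by
    apply hc
    rwa [sphChart_proj i σ r hσ hr x hx hi]
  have h2 : {y : Fin n → ℝ | 0 < r ^ 2 - ∑ j, y j ^ 2} ∈ nhds (sphProj i x) := by
    refine IsOpen.mem_nhds ?_ hpos
    exact isOpen_lt continuous_const (by fun_prop)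
  have h3 := Filter.inter_mem h1 h2
  have := hausdorffMeasure_pi_real (ι := Fin n)
  rw [Fintype.card_fin] at this
  have h4 : 0 < (μH[(n : ℝ)] : Measure (Fin n → ℝ)) (sphProj i '' (N ∩ sphere 0 r)) := by
    rw [this]
    refine Measure.measure_pos_of_mem_nhds volume (x := sphProj i x) (Filter.mem_of_superset h3 ?_)
    rintro y ⟨hy1, hy2⟩
    exact ⟨sphChart i σ r y, ⟨hy1, sphChart_mem i σ r hσ hr y (le_of_lt hy2)⟩, sphProj_chart _ _ _ _⟩
  refine h4.trans_le ?_
  have := ((sphProj_lip i).lipschitzOnWith (s := N ∩ sphere 0 r)).hausdorffMeasure_image_le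
    (Nat.cast_nonneg n)
  simpa using this

def cutTheta (τ : ℝ) : ℝ := max 0 (min 1 (|τ| - 1))
def cutF1 (t : ℝ) : ℝ := ∫ τ in (0:ℝ)..t, cutTheta τ
def cutF (t : ℝ) : ℝ := ∫ τ in (0:ℝ)..t, cutF1 τ

lemma cutTheta_cont : Continuous cutTheta := by unfold cutTheta; fun_prop
lemma cutTheta_nonneg (t : ℝ) : 0 ≤ cutTheta t := le_max_left _ _
lemma cutTheta_le (t : ℝ) : cutTheta t ≤ 1 := max_le zero_le_one (min_le_left _ _)
lemma cutF1_hasDeriv (t : ℝ) : HasDerivAt cutF1 (cutTheta t) t :=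
  cutTheta_cont.integral_hasStrictDerivAt 0 t |>.hasDerivAt
lemma cutF1_cont : Continuous cutF1 :=
  continuous_iff_continuousAt.2 fun t => (cutF1_hasDeriv t).continuousAt
lemma cutF_hasDeriv (t : ℝ) : HasDerivAt cutF (cutF1 t) t :=
  cutF1_cont.integral_hasStrictDerivAt 0 t |>.hasDerivAt
lemma cutF_contDiff : ContDiff ℝ 2 cutF := by
  have e1 : deriv cutF = cutF1 := funext fun t => (cutF_hasDeriv t).deriv
  have e2 : deriv cutF1 = cutTheta := funext fun t => (cutF1_hasDeriv t).deriv
  have : ContDiff ℝ (1 + 1) cutF := by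
    rw [contDiff_succ_iff_deriv, e1, contDiff_one_iff_deriv, e2]
    exact ⟨fun t => (cutF_hasDeriv t).differentiableAt, by simp,
      fun t => (cutF1_hasDeriv t).differentiableAt, cutTheta_cont⟩
  simpa [one_add_one_eq_two] using this
lemma cutF1_zero {t : ℝ} (ht : |t| ≤ 1) : cutF1 t = 0 := by
  unfold cutF1
  have : Set.EqOn cutTheta (fun _ => 0) (Set.uIcc 0 t) := by
    intro s hs
    have : |s| ≤ |t| := by simpa using Set.abs_sub_left_of_mem_uIcc hs
    exact max_eq_left ((min_le_right _ _).trans (by linarith))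
  rw [intervalIntegral.integral_congr this]; simp
lemma cutF_zero {t : ℝ} (ht : |t| ≤ 1) : cutF t = 0 := by
  unfold cutF
  have : Set.EqOn cutF1 (fun _ => 0) (Set.uIcc 0 t) := by
    intro s hs
    have : |s| ≤ |t| := by simpa using Set.abs_sub_left_of_mem_uIcc hs
    exact cutF1_zero (this.trans ht)
  rw [intervalIntegral.integral_congr this]; simp
lemma cutF1_abs_le (t : ℝ) : |cutF1 t| ≤ |t| := by
  have := intervalIntegral.norm_integral_le_of_norm_le_const (a := 0) (b := t) (C := 1)
    (f := cutTheta) (fun x _ => by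
      rw [Real.norm_eq_abs, abs_of_nonneg (cutTheta_nonneg x)]; exact cutTheta_le x)
  simpa [cutF1] using this
lemma cutF_le (t : ℝ) : cutF t ≤ t ^ 2 := by
  have := intervalIntegral.norm_integral_le_of_norm_le_const (a := 0) (b := t) (C := |t|)
    (f := cutF1) (fun x hx => by
      rw [Real.norm_eq_abs]
      refine (cutF1_abs_le x).trans ?_
      simpa using Set.abs_sub_left_of_mem_uIcc (Set.uIoc_subset_uIcc hx))
  rw [sub_zero, ← sq, sq_abs] at this
  exact (le_abs_self _).trans this
lemma cutF1_nonneg {t : ℝ} (ht : 0 ≤ t) : 0 ≤ cutF1 t :=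
  intervalIntegral.integral_nonneg ht fun x _ => cutTheta_nonneg x
lemma cutF1_pos : 0 < cutF1 4 :=
  intervalIntegral.integral_pos (by norm_num) cutTheta_cont.continuousOn
    (fun x _ => cutTheta_nonneg x) ⟨4, by norm_num, by
      unfold cutTheta; rw [abs_of_pos (by norm_num)]; norm_num⟩
lemma cutF_pos : 0 < cutF 4 :=
  intervalIntegral.integral_pos (by norm_num) cutF1_cont.continuousOn
    (fun x hx => cutF1_nonneg hx.1.le) ⟨4, by norm_num, cutF1_pos⟩

def etaF {d : ℕ} (x : EuclideanSpace ℝ (Fin d)) : ℝ := (max 0 (1 - ‖x‖ ^ 2)) ^ 2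
def psiF {d : ℕ} (x : EuclideanSpace ℝ (Fin d)) : ℝ := (max 0 (1 - ‖x‖ ^ 2)) ^ 3 / 6

lemma hasDerivAt_posCube (s : ℝ) : HasDerivAt (fun s : ℝ => (max 0 s) ^ 3) (3 * (max 0 s) ^ 2) s := by
  rcases lt_trichotomy s 0 with h | h | h
  · rw [max_eq_left h.le]
    have : (fun s : ℝ => (max 0 s) ^ 3) =ᶠ[nhds s] fun _ => 0 := by
      filter_upwards [gt_mem_nhds h] with z hz
      rw [max_eq_left (le_of_lt hz)]; norm_num
    simpa using (hasDerivAt_const s (0:ℝ)).congr_of_eventuallyEq this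
  · subst h
    rw [hasDerivAt_iff_isLittleO]
    simp only [max_self, ne_eq, OfNat.ofNat_ne_zero, not_false_eq_true, zero_pow, mul_zero, sub_zero, smul_zero]
    have h1 : (fun x : ℝ => (max 0 x) ^ 3) =O[nhds 0] fun x : ℝ => x ^ 3 := by
      refine Asymptotics.IsBigO.of_bound 1 (Filter.Eventually.of_forall fun x => ?_)
      rw [one_mul, norm_pow, norm_pow]
      gcongr
      rw [Real.norm_eq_abs, Real.norm_eq_abs, abs_of_nonneg (le_max_left _ _)]
      exact max_le (abs_nonneg _) (le_abs_self _)
    exact h1.trans_isLittleO (by simpa using Asymptotics.isLittleO_pow_id (𝕜 := ℝ) (n := 3) (by norm_num))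
  · rw [max_eq_right h.le]
    have : (fun s : ℝ => (max 0 s) ^ 3) =ᶠ[nhds s] fun s => s ^ 3 := by
      filter_upwards [lt_mem_nhds h] with z hz
      rw [max_eq_right (le_of_lt hz)]
    simpa using (hasDerivAt_pow 3 s).congr_of_eventuallyEq this

lemma etaF_cont {d : ℕ} : Continuous (etaF (d := d)) := by unfold etaF; fun_prop
lemma psiF_cont {d : ℕ} : Continuous (psiF (d := d)) := by unfold psiF; fun_prop
lemma etaF_nonneg {d : ℕ} (x : EuclideanSpace ℝ (Fin d)) : 0 ≤ etaF x := sq_nonneg _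
lemma psiF_nonneg {d : ℕ} (x : EuclideanSpace ℝ (Fin d)) : 0 ≤ psiF x := by
  unfold psiF; have := le_max_left 0 (1 - ‖x‖ ^ 2); positivity
lemma etaF_le {d : ℕ} (x : EuclideanSpace ℝ (Fin d)) : etaF x ≤ 1 := by
  unfold etaF
  refine pow_le_one₀ (le_max_left _ _) (max_le zero_le_one ?_)
  nlinarith [norm_nonneg x]
lemma max_zero_out {d : ℕ} (x : EuclideanSpace ℝ (Fin d)) (hx : x ∉ ball (0 : EuclideanSpace ℝ (Fin d)) 1) :
    max 0 (1 - ‖x‖ ^ 2) = 0 := by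
  rw [mem_ball_zero_iff, not_lt] at hx
  exact max_eq_left (by nlinarith)
lemma etaF_out {d : ℕ} (x : EuclideanSpace ℝ (Fin d)) (hx : x ∉ ball (0 : EuclideanSpace ℝ (Fin d)) 1) :
    etaF x = 0 := by rw [etaF, max_zero_out x hx]; norm_num
lemma psiF_out {d : ℕ} (x : EuclideanSpace ℝ (Fin d)) (hx : x ∉ ball (0 : EuclideanSpace ℝ (Fin d)) 1) :
    psiF x = 0 := by rw [psiF, max_zero_out x hx]; norm_num
lemma etaF_cs {d : ℕ} : HasCompactSupport (etaF (d := d)) :=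
  HasCompactSupport.intro (isCompact_closedBall 0 1) fun x hx =>
    etaF_out x fun h => hx (ball_subset_closedBall h)
lemma psiF_cs {d : ℕ} : HasCompactSupport (psiF (d := d)) :=
  HasCompactSupport.intro (isCompact_closedBall 0 1) fun x hx =>
    psiF_out x fun h => hx (ball_subset_closedBall h)

lemma psiF_hasFDeriv {d : ℕ} (x : EuclideanSpace ℝ (Fin d)) :
    HasFDerivAt psiF (-(etaF x) • innerSL ℝ x) x := by
  have h1 : HasFDerivAt (fun x : EuclideanSpace ℝ (Fin d) => 1 - ‖x‖ ^ 2) (-(2 • innerSL ℝ x)) x :=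
    ((hasStrictFDerivAt_norm_sq x).hasFDerivAt).const_sub 1
  have h2 := ((hasDerivAt_posCube (1 - ‖x‖ ^ 2)).comp_hasFDerivAt x h1).mul_const (1 / 6)
  have e : psiF = fun y : EuclideanSpace ℝ (Fin d) => (((fun s : ℝ => max 0 s ^ 3) ∘ fun x : EuclideanSpace ℝ (Fin d) => 1 - ‖x‖ ^ 2) y) * (1 / 6) := by
    funext y; simp [psiF, div_eq_mul_inv]
  rw [e]
  refine h2.congr_fderiv ?_
  refine ContinuousLinearMap.ext fun v => ?_
  simp only [etaF, smul_apply, neg_apply, smul_eq_mul,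
    innerSL_apply_apply, nsmul_eq_mul]
  push_cast
  ring

lemma psiF_fderiv_single {d : ℕ} (x : EuclideanSpace ℝ (Fin d)) (i : Fin d) :
    fderiv ℝ psiF x (EuclideanSpace.single i 1) = -(x i * etaF x) := by
  rw [(psiF_hasFDeriv x).fderiv]
  simp [mul_comm, EuclideanSpace.inner_single_right]

lemma smooth_mvi {d : ℕ} (w : EuclideanSpace ℝ (Fin d) → ℝ) (hw : ContDiff ℝ 2 w)
    (hcs : HasCompactSupport w) (y : EuclideanSpace ℝ (Fin d)) (ρ : ℝ) (hρ : 0 < ρ)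
    (hlap : ∀ x ∈ ball y ρ, 0 ≤ lap d w x) :
    w y * ∫ x, etaF (d := d) x ≤ ∫ x, w (y + ρ • x) * etaF x := by
  have hw1 : Continuous (fderiv ℝ w) := hw.continuous_fderiv (by norm_num)
  have hwd : Differentiable ℝ w := hw.differentiable (by norm_num)
  obtain ⟨C, hC⟩ : ∃ C, ∀ x, ‖fderiv ℝ w x‖ ≤ C := by
    obtain ⟨C, hC⟩ := hw1.bounded_above_of_compact_support (hcs.fderiv ℝ)
    exact ⟨C, hC⟩
  have hC0 : 0 ≤ C := (norm_nonneg _).trans (hC 0)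
  have hD : ∀ t : ℝ, HasDerivAt (fun t : ℝ => ∫ x, w (y + t • x) * etaF x)
      (∫ x, fderiv ℝ w (y + t • x) x * etaF x) t := by
    intro t
    refine (hasDerivAt_integral_of_dominated_loc_of_deriv_le (F := fun t x => w (y + t • x) * etaF x) (F' := fun t x => fderiv ℝ w (y + t • x) x * etaF x)
      (bound := fun x => C * etaF x) Filter.univ_mem ?_ ?_ ?_ ?_ ?_ ?_).2
    · refine Filter.Eventually.of_forall fun t => Continuous.aestronglyMeasurable ?_
      exact (hw.continuous.comp (by fun_prop)).mul etaF_cont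
    · exact Continuous.integrable_of_hasCompactSupport ((hw.continuous.comp (by fun_prop)).mul etaF_cont) etaF_cs.mul_left
    · refine Continuous.aestronglyMeasurable ?_
      exact ((hw1.comp (by fun_prop)).clm_apply continuous_id).mul etaF_cont
    · refine Filter.Eventually.of_forall fun x t _ => ?_
      rw [norm_mul, Real.norm_of_nonneg (etaF_nonneg x)]
      by_cases hx : x ∈ ball (0 : EuclideanSpace ℝ (Fin d)) 1
      · refine mul_le_mul_of_nonneg_right ?_ (etaF_nonneg x)
        refine ((fderiv ℝ w (y + t • x)).le_opNorm x).trans ?_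
        have := (mem_ball_zero_iff.1 hx).le
        calc _ ≤ C * 1 := by gcongr; exact hC _
          _ = C := mul_one _
      · rw [etaF_out x hx]; simp
    · exact (etaF_cont.integrable_of_hasCompactSupport etaF_cs).const_mul C
    · refine Filter.Eventually.of_forall fun x t _ => ?_
      have h1 : HasDerivAt (fun t : ℝ => y + t • x) x t := by
        simpa using ((hasDerivAt_id t).smul_const x).const_add y
      exact ((hwd (y + t • x)).hasFDerivAt.comp_hasDerivAt t h1).mul_const (etaF x)
  have hnn : ∀ t ∈ Set.Ioo 0 ρ, 0 ≤ ∫ x, fderiv ℝ w (y + t • x) x * etaF x := by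
    intro t ht
    have hg : ∀ i : Fin d, ContDiff ℝ 1 (fun z => fderiv ℝ w z (EuclideanSpace.single i 1)) := by
      intro i
      exact (hw.fderiv_right (m := 1) (by norm_num [one_add_one_eq_two])).clm_apply contDiff_const
    have hgc : ∀ i : Fin d, ContDiff ℝ 1 (fun x => fderiv ℝ w (y + t • x) (EuclideanSpace.single i 1)) := by
      intro i
      exact (hg i).comp (by fun_prop : ContDiff ℝ 1 fun x : EuclideanSpace ℝ (Fin d) => y + t • x)
    have hgd : ∀ (i : Fin d) x, fderiv ℝ (fun x => fderiv ℝ w (y + t • x) (EuclideanSpace.single i 1)) x (EuclideanSpace.single i 1)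
        = t * fderiv ℝ (fun z => fderiv ℝ w z (EuclideanSpace.single i 1)) (y + t • x) (EuclideanSpace.single i 1) := by
      intro i x
      have h1 : HasFDerivAt (fun x : EuclideanSpace ℝ (Fin d) => y + t • x) (t • ContinuousLinearMap.id ℝ _) x :=
        ((hasFDerivAt_id x).const_smul t).const_add y
      have h2 := (((hg i).differentiable (by norm_num) (y + t • x)).hasFDerivAt).comp x h1
      have h3 := h2.fderiv
      simp only [Function.comp_def] at h3
      rw [h3]; simp
    have e1 : ∀ x, fderiv ℝ w (y + t • x) x * etaF x
        = ∑ i, -(fderiv ℝ w (y + t • x) (EuclideanSpace.single i 1) * fderiv ℝ psiF x (EuclideanSpace.single i 1)) := by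
      intro x
      simp only [psiF_fderiv_single]
      have hx : x = ∑ i, x i • EuclideanSpace.single i (1:ℝ) := by
        simpa using ((EuclideanSpace.basisFun (Fin d) ℝ).sum_repr x).symm
      conv_lhs => enter [1, 2]; rw [hx]
      rw [map_sum, Finset.sum_mul]
      refine Finset.sum_congr rfl fun i _ => ?_
      rw [map_smul, smul_eq_mul]; ring
    have hpd : Differentiable ℝ (psiF (d := d)) := fun x => (psiF_hasFDeriv x).differentiableAt
    have cpsi : ∀ i, Continuous fun x => fderiv ℝ (psiF (d := d)) x (EuclideanSpace.single i 1) := by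
      intro i
      simp only [psiF_fderiv_single]
      exact (Continuous.mul (by fun_prop) etaF_cont).neg
    have spsi : ∀ i, HasCompactSupport fun x => fderiv ℝ (psiF (d := d)) x (EuclideanSpace.single i 1) := by
      intro i
      simp only [psiF_fderiv_single]
      exact (etaF_cs.mul_left (f := fun x => x i)).neg
    have i1 : ∀ i, Integrable fun x => fderiv ℝ w (y + t • x) (EuclideanSpace.single i 1) * fderiv ℝ psiF x (EuclideanSpace.single i 1) := by
      intro i
      exact ((hgc i).continuous.mul (cpsi i)).integrable_of_hasCompactSupport (spsi i).mul_left
    have i2 : ∀ i, Integrable fun x => fderiv ℝ (fun x => fderiv ℝ w (y + t • x) (EuclideanSpace.single i 1)) x (EuclideanSpace.single i 1) * psiF x := by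
      intro i
      exact ((((hgc i).continuous_fderiv (by norm_num)).clm_apply continuous_const).mul psiF_cont).integrable_of_hasCompactSupport psiF_cs.mul_left
    have e2 : ∀ i, ∫ x, fderiv ℝ w (y + t • x) (EuclideanSpace.single i 1) * fderiv ℝ psiF x (EuclideanSpace.single i 1)
        = - ∫ x, fderiv ℝ (fun x => fderiv ℝ w (y + t • x) (EuclideanSpace.single i 1)) x (EuclideanSpace.single i 1) * psiF x := by
      intro i
      refine integral_mul_fderiv_eq_neg_fderiv_mul_of_integrable (i2 i) (i1 i) ?_ ?_ ?_
      · exact ((hgc i).continuous.mul psiF_cont).integrable_of_hasCompactSupport psiF_cs.mul_left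
      · exact fun x _ => (hgc i).differentiable (by norm_num) x
      · exact fun x _ => hpd x
    simp only [e1]
    rw [integral_finsetSum _ (fun i _ => (i1 i).fun_neg)]
    simp only [integral_neg, e2, neg_neg]
    rw [← integral_finsetSum _ (fun i _ => i2 i)]
    refine integral_nonneg fun x => ?_
    simp only [hgd, Pi.zero_apply]
    rw [← Finset.sum_mul, ← Finset.mul_sum]
    by_cases hx : x ∈ ball (0 : EuclideanSpace ℝ (Fin d)) 1
    · refine mul_nonneg (mul_nonneg ht.1.le (hlap _ ?_)) (psiF_nonneg x)
      have := mem_ball_zero_iff.1 hx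
      rw [mem_ball, dist_eq_norm, add_sub_cancel_left, norm_smul, Real.norm_of_nonneg ht.1.le]
      nlinarith [ht.1, ht.2, norm_nonneg x]
    · rw [psiF_out x hx, mul_zero]
  have hmono : MonotoneOn (fun t : ℝ => ∫ x, w (y + t • x) * etaF x) (Set.Icc 0 ρ) := by
    refine monotoneOn_of_deriv_nonneg (convex_Icc _ _) ?_ ?_ ?_
    · exact fun t _ => (hD t).continuousAt.continuousWithinAt
    · exact fun t _ => (hD t).differentiableAt.differentiableWithinAt
    · intro t ht
      rw [interior_Icc] at ht
      rw [(hD t).deriv]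
      exact hnn t ht
  have := hmono (Set.left_mem_Icc.2 hρ.le) (Set.right_mem_Icc.2 hρ.le) hρ.le
  simpa [integral_const_mul] using this

lemma lap_congr {d : ℕ} {f g : EuclideanSpace ℝ (Fin d) → ℝ} {x : EuclideanSpace ℝ (Fin d)}
    (h : f =ᶠ[nhds x] g) : lap d f x = lap d g x := by
  unfold lap
  refine Finset.sum_congr rfl fun i _ => ?_
  have : (fun y => fderiv ℝ f y (EuclideanSpace.single i 1)) =ᶠ[nhds x]
      fun y => fderiv ℝ g y (EuclideanSpace.single i 1) := by
    filter_upwards [h.eventuallyEq_nhds] with z hz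
    rw [hz.fderiv_eq]
  rw [this.fderiv_eq]

lemma lap_const_mul {d : ℕ} (a : ℝ) (f : EuclideanSpace ℝ (Fin d) → ℝ) (x : EuclideanSpace ℝ (Fin d)) :
    lap d (fun z => a * f z) x = a * lap d f x := by
  unfold lap
  rw [Finset.mul_sum]
  refine Finset.sum_congr rfl fun i _ => ?_
  have e1 : ∀ g : EuclideanSpace ℝ (Fin d) → ℝ, ∀ y, fderiv ℝ (fun z => a * g z) y = a • fderiv ℝ g y := by
    intro g y
    exact congrFun (fderiv_const_smul_field (𝕜 := ℝ) (f := g) a) y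
  simp only [e1, smul_apply, smul_eq_mul]

lemma lap_zero {d : ℕ} (x : EuclideanSpace ℝ (Fin d)) : lap d (fun _ => 0) x = 0 := by
  simp [lap]

lemma lap_cut_nonneg {d : ℕ} (v : EuclideanSpace ℝ (Fin d) → ℝ) (x : EuclideanSpace ℝ (Fin d))
    (hv : ContDiffAt ℝ 2 v x) (hl : lap d v x = 0) : 0 ≤ lap d (fun z => cutF (v z)) x := by
  have hev : ∀ᶠ z in nhds x, DifferentiableAt ℝ v z := by
    filter_upwards [hv.eventually (by simp)] with z hz
    exact hz.differentiableAt (by norm_num)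
  have hvx : DifferentiableAt ℝ v x := hv.differentiableAt (by norm_num)
  have key : lap d (fun z => cutF (v z)) x
      = ∑ i : Fin d, (cutTheta (v x) * (fderiv ℝ v x (EuclideanSpace.single i 1)) ^ 2) + cutF1 (v x) * lap d v x := by
    unfold lap
    rw [Finset.mul_sum, ← Finset.sum_add_distrib]
    refine Finset.sum_congr rfl fun i _ => ?_
    have e : (fun y => fderiv ℝ (fun z => cutF (v z)) y (EuclideanSpace.single i 1)) =ᶠ[nhds x]
        fun y => cutF1 (v y) * fderiv ℝ v y (EuclideanSpace.single i 1) := by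
      filter_upwards [hev] with z hz
      have := ((cutF_hasDeriv (v z)).comp_hasFDerivAt z hz.hasFDerivAt).fderiv
      simp only [Function.comp_def] at this
      rw [this]; simp
    rw [e.fderiv_eq]
    have h1 : HasFDerivAt (fun y => cutF1 (v y)) (cutTheta (v x) • fderiv ℝ v x) x :=
      (cutF1_hasDeriv (v x)).comp_hasFDerivAt x hvx.hasFDerivAt
    have h2 : DifferentiableAt ℝ (fun y => fderiv ℝ v y (EuclideanSpace.single i 1)) x := by
      have := (hv.fderiv_right (m := 1) (by norm_num [one_add_one_eq_two])).differentiableAt (by norm_num)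
      exact this.clm_apply (differentiableAt_const _)
    have h3 := (h1.mul h2.hasFDerivAt).fderiv
    have h3' : fderiv ℝ (fun y => cutF1 (v y) * fderiv ℝ v y (EuclideanSpace.single i 1)) x = _ := h3
    rw [h3']
    simp only [add_apply, smul_apply, smul_eq_mul]
    ring
  rw [key, hl, mul_zero, add_zero]
  exact Finset.sum_nonneg fun i _ => mul_nonneg (cutTheta_nonneg _) (sq_nonneg _)

lemma etaF_int_pos {d : ℕ} : 0 < ∫ x, etaF (d := d) x := by
  refine etaF_cont.integral_pos_of_hasCompactSupport_nonneg_nonzero etaF_cs etaF_nonneg (x := 0) ?_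
  simp [etaF]

lemma mvi_aux {d : ℕ} (v : EuclideanSpace ℝ (Fin d) → ℝ) (R : ℝ)
    (hc : ContinuousOn v (ball 0 R))
    (h : ∀ x ∈ ball (0 : EuclideanSpace ℝ (Fin d)) R, v x ≠ 0 → ContDiffAt ℝ 2 v x ∧ lap d v x = 0)
    (y : EuclideanSpace ℝ (Fin d)) (ρ : ℝ) (hρ : 0 < ρ) (hyR : ‖y‖ + ρ < R) :
    cutF (v y) * (∫ x, etaF (d := d) x) * ρ ^ d ≤ ∫ x in ball y ρ, v x ^ 2 := by
  let χ : ContDiffBump y := ⟨ρ, (ρ + (R - ‖y‖)) / 2, hρ, by linarith⟩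
  have hsub : ∀ z ∈ closedBall y ((ρ + (R - ‖y‖)) / 2), z ∈ ball (0 : EuclideanSpace ℝ (Fin d)) R := by
    intro z hz
    rw [mem_closedBall, dist_eq_norm] at hz
    rw [mem_ball_zero_iff]
    have := norm_add_le (z - y) y
    rw [sub_add_cancel] at this
    linarith
  have hcut0 : ∀ x ∈ ball (0 : EuclideanSpace ℝ (Fin d)) R, v x = 0 → (fun z => cutF (v z)) =ᶠ[nhds x] fun _ => 0 := by
    intro x hx hv
    have h1 : ContinuousAt v x := hc.continuousAt (isOpen_ball.mem_nhds hx)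
    have h2 : ∀ᶠ z in nhds x, |v z| < 1 := by
      have := h1.abs
      exact this.eventually_lt continuousAt_const (by simp [hv])
    filter_upwards [h2] with z hz
    exact cutF_zero hz.le
  have hcd : ∀ x ∈ ball (0 : EuclideanSpace ℝ (Fin d)) R, ContDiffAt ℝ 2 (fun z => cutF (v z)) x := by
    intro x hx
    by_cases hv : v x = 0
    · exact contDiffAt_const.congr_of_eventuallyEq (hcut0 x hx hv)
    · exact cutF_contDiff.contDiffAt.comp x (h x hx hv).1
  have hlp : ∀ x ∈ ball (0 : EuclideanSpace ℝ (Fin d)) R, 0 ≤ lap d (fun z => cutF (v z)) x := by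
    intro x hx
    by_cases hv : v x = 0
    · rw [lap_congr (hcut0 x hx hv), lap_zero]
    · exact lap_cut_nonneg v x (h x hx hv).1 (h x hx hv).2
  set w : EuclideanSpace ℝ (Fin d) → ℝ := fun z => χ z * cutF (v z) with hw
  have hw2 : ContDiff ℝ 2 w := by
    rw [contDiff_iff_contDiffAt]
    intro x
    by_cases hx : x ∈ closedBall y ((ρ + (R - ‖y‖)) / 2)
    · exact χ.contDiff.contDiffAt.mul (hcd x (hsub x hx))
    · have : w =ᶠ[nhds x] fun _ => 0 := by
        filter_upwards [isClosed_closedBall.isOpen_compl.mem_nhds hx] with z hz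
        have : χ z = 0 := χ.zero_of_le_dist (by
          rw [Set.mem_compl_iff, mem_closedBall, not_le] at hz; exact hz.le)
        simp [hw, this]
      exact contDiffAt_const.congr_of_eventuallyEq this
  have hwcs : HasCompactSupport w := χ.hasCompactSupport.mul_right
  have hweq : ∀ x ∈ ball y ρ, w x = cutF (v x) := by
    intro x hx
    have : χ x = 1 := χ.one_of_mem_closedBall (ball_subset_closedBall hx)
    simp [hw, this]
  have hwy : w y = cutF (v y) := hweq y (mem_ball_self hρ)
  have hballsub : ∀ x ∈ ball y ρ, x ∈ ball (0 : EuclideanSpace ℝ (Fin d)) R := fun x hx =>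
    hsub x (closedBall_subset_closedBall (by linarith) (ball_subset_closedBall hx))
  have hwl : ∀ x ∈ ball y ρ, 0 ≤ lap d w x := by
    intro x hx
    have : w =ᶠ[nhds x] fun z => cutF (v z) := by
      filter_upwards [isOpen_ball.mem_nhds hx] with z hz using hweq z hz
    rw [lap_congr this]
    exact hlp x (hballsub x hx)
  have hmain := smooth_mvi w hw2 hwcs y ρ hρ hwl
  rw [hwy] at hmain
  set G : EuclideanSpace ℝ (Fin d) → ℝ := (ball y ρ).indicator fun x => v x ^ 2 with hG
  have hGi : Integrable G := by
    rw [hG, integrable_indicator_iff measurableSet_ball]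
    refine IntegrableOn.mono_set (t := closedBall y ρ) ?_ ball_subset_closedBall
    refine ContinuousOn.integrableOn_compact (isCompact_closedBall _ _) ?_
    refine (hc.mono fun z hz => hsub z (closedBall_subset_closedBall (by linarith) hz)).pow 2
  have hGi2 : Integrable (fun x => G (y + ρ • x)) :=
    (hGi.comp_add_left y).comp_smul hρ.ne'
  have hle : ∫ x, w (y + ρ • x) * etaF x ≤ ∫ x, G (y + ρ • x) := by
    have hi : Integrable fun x => w (y + ρ • x) * etaF x :=
      Continuous.integrable_of_hasCompactSupport ((hw2.continuous.comp (by fun_prop)).mul etaF_cont)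
        etaF_cs.mul_left
    refine integral_mono hi hGi2 fun x => ?_
    by_cases hx : x ∈ ball (0 : EuclideanSpace ℝ (Fin d)) 1
    · have hm : y + ρ • x ∈ ball y ρ := by
        have := mem_ball_zero_iff.1 hx
        rw [mem_ball, dist_eq_norm, add_sub_cancel_left, norm_smul, Real.norm_of_nonneg hρ.le]
        nlinarith
      simp only [hG, Set.indicator_of_mem hm, hweq _ hm]
      have h1 := cutF_le (v (y + ρ • x))
      have h2 := etaF_nonneg x
      have h3 := etaF_le x
      nlinarith [sq_nonneg (v (y + ρ • x))]
    · simp only [etaF_out x hx, mul_zero]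
      exact Set.indicator_nonneg (fun _ _ => sq_nonneg _) _
  have hcv : ∫ x, G (y + ρ • x) = (ρ ^ d)⁻¹ * ∫ x in ball y ρ, v x ^ 2 := by
    have := Measure.integral_comp_smul (volume : Measure (EuclideanSpace ℝ (Fin d))) (fun x => G (y + x)) ρ
    rw [this, integral_add_left_eq_self, hG, integral_indicator measurableSet_ball]
    simp [abs_of_pos hρ]
  rw [hcv] at hle
  have := hmain.trans hle
  have hρd : 0 < ρ ^ d := by positivity
  calc _ ≤ ((ρ ^ d)⁻¹ * ∫ x in ball y ρ, v x ^ 2) * ρ ^ d := by gcongr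
    _ = _ := by field_simp

lemma mvi (d : ℕ) : ∃ C : ℝ, 0 < C ∧ ∀ (u : EuclideanSpace ℝ (Fin d) → ℝ) (R : ℝ),
    ContinuousOn u (ball 0 R) →
    (∀ x ∈ ball (0 : EuclideanSpace ℝ (Fin d)) R, u x ≠ 0 → ContDiffAt ℝ 2 u x ∧ lap d u x = 0) →
    ∀ (y : EuclideanSpace ℝ (Fin d)) (ρ : ℝ), 0 < ρ → ‖y‖ + ρ < R →
    u y ^ 2 * ρ ^ d ≤ C * ∫ x in ball y ρ, u x ^ 2 := by
  have hk := cutF_pos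
  have hI := etaF_int_pos (d := d)
  set κ := cutF 4
  set I := ∫ x, etaF (d := d) x
  refine ⟨16 / (κ * I), by positivity, fun u R hc h y ρ hρ hy => ?_⟩
  by_cases hu : u y = 0
  · rw [hu]
    have : 0 ≤ ∫ x in ball y ρ, u x ^ 2 := integral_nonneg fun x => sq_nonneg _
    simp; positivity
  have := mvi_aux (fun x => 4 / u y * u x) R (continuousOn_const.mul hc) (fun x hx hne => by
    obtain ⟨h1, h2⟩ := h x hx (right_ne_zero_of_mul hne)
    exact ⟨contDiffAt_const.mul h1, by rw [lap_const_mul, h2, mul_zero]⟩) y ρ hρ hy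
  simp only [div_mul_cancel₀ _ hu, mul_pow, integral_const_mul] at this
  rw [div_pow] at this
  have hu2 : 0 < u y ^ 2 := by positivity
  rw [div_mul_eq_mul_div, le_div_iff₀ (by positivity)]
  rw [div_mul_eq_mul_div, le_div_iff₀ hu2] at this
  norm_num at this
  calc _ = κ * I * ρ ^ d * u y ^ 2 := by ring
    _ ≤ _ := this

lemma liouville_aux {d : ℕ} (hd : d ≠ 0) (v : EuclideanSpace ℝ (Fin d) → ℝ) (hvc : Continuous v)
    (hvh : ∀ x, v x ≠ 0 → ContDiffAt ℝ 2 v x ∧ lap d v x = 0)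
    (hint : Integrable fun x => v x ^ 2) (y : EuclideanSpace ℝ (Fin d)) (hvy : v y ≠ 0) : False := by
  obtain ⟨C, hC, hm⟩ := mvi d
  set A := C * ∫ x, v x ^ 2
  have hA : 0 ≤ A := mul_nonneg hC.le (integral_nonneg fun x => sq_nonneg _)
  have hv2 : 0 < v y ^ 2 := by positivity
  have key : ∀ ρ : ℝ, 1 ≤ ρ → v y ^ 2 * ρ ≤ A := by
    intro ρ hρ
    have h1 := hm v (‖y‖ + ρ + 1) hvc.continuousOn (fun x _ => hvh x) y ρ (by linarith) (by linarith)
    have h2 : ∫ x in ball y ρ, v x ^ 2 ≤ ∫ x, v x ^ 2 :=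
      setIntegral_le_integral hint (Filter.Eventually.of_forall fun x => sq_nonneg _)
    have h3 : ρ ≤ ρ ^ d := le_self_pow₀ hρ hd
    calc v y ^ 2 * ρ ≤ v y ^ 2 * ρ ^ d := by gcongr
      _ ≤ _ := h1
      _ ≤ A := mul_le_mul_of_nonneg_left h2 hC.le
  have := key (A / v y ^ 2 + 1) (by have : 0 ≤ A / v y ^ 2 := by positivity
                                    linarith)
  rw [mul_add, mul_div_cancel₀ _ hv2.ne'] at this
  linarith

lemma exists_sphere_ne {d : ℕ} (hd : d ≠ 0) (u : EuclideanSpace ℝ (Fin d) → ℝ)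
    (hc : ContinuousOn u (ball 0 1))
    (h : ∀ x ∈ ball (0 : EuclideanSpace ℝ (Fin d)) 1, u x ≠ 0 → ContDiffAt ℝ 2 u x ∧ lap d u x = 0)
    (hn : ∃ x ∈ ball (0 : EuclideanSpace ℝ (Fin d)) (1 / 2), u x ≠ 0) :
    ∃ x ∈ sphere (0 : EuclideanSpace ℝ (Fin d)) (1 / 2), u x ≠ 0 := by
  by_contra! hz
  obtain ⟨y, hy, hne⟩ := hn
  set B : Set (EuclideanSpace ℝ (Fin d)) := ball 0 (1 / 2) with hB
  set v : EuclideanSpace ℝ (Fin d) → ℝ := B.indicator u with hv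
  have hvc : Continuous v := by
    refine continuous_indicator ?_ ?_
    · intro a ha
      rw [hB, frontier_ball _ (by norm_num)] at ha
      exact hz a ha
    · rw [hB, closure_ball _ (by norm_num)]
      exact hc.mono (closedBall_subset_ball (by norm_num))
  have hvh : ∀ x, v x ≠ 0 → ContDiffAt ℝ 2 v x ∧ lap d v x = 0 := by
    intro x hx
    have hxB : x ∈ B := Set.mem_of_indicator_ne_zero hx
    have e : v =ᶠ[nhds x] u := by
      filter_upwards [isOpen_ball.mem_nhds hxB] with z hz
      exact Set.indicator_of_mem hz u
    have hux : u x ≠ 0 := by rwa [e.eq_of_nhds] at hx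
    obtain ⟨h1, h2⟩ := h x (ball_subset_ball (by norm_num) hxB) hux
    exact ⟨h1.congr_of_eventuallyEq e, by rw [lap_congr e, h2]⟩
  have hvy : v y ≠ 0 := by rwa [hv, Set.indicator_of_mem hy]
  have hint : Integrable fun x => v x ^ 2 := by
    have hcs : HasCompactSupport fun x => v x ^ 2 := by
      refine HasCompactSupport.intro
        (isCompact_closedBall (0 : EuclideanSpace ℝ (Fin d)) (1 / 2)) fun x hx => ?_
      have hx0 : v x = 0 := Set.indicator_of_notMem (fun h => hx (ball_subset_closedBall h)) u
      rw [hx0]; norm_num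
    have hc2 : Continuous fun x => v x ^ 2 := hvc.pow 2
    exact hc2.integrable_of_hasCompactSupport hcs
  exact liouville_aux hd v hvc hvh hint y hvy

lemma sphAvg_pos {n : ℕ} (u : EuclideanSpace ℝ (Fin (n + 1)) → ℝ)
    (hc : ContinuousOn u (ball 0 1))
    (x : EuclideanSpace ℝ (Fin (n + 1))) (hx : x ∈ sphere (0 : EuclideanSpace ℝ (Fin (n + 1))) (1 / 2))
    (hu : u x ≠ 0) : 0 < sphAvg (n + 1) (fun x => u x ^ 2) (1 / 2) := by
  have hfin := sphere_finite n (1 / 2) (by norm_num)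
  have hsub : sphere (0 : EuclideanSpace ℝ (Fin (n + 1))) (1 / 2) ⊆ ball 0 1 :=
    sphere_subset_closedBall.trans (closedBall_subset_ball (by norm_num))
  unfold sphAvg
  rw [setAverage_eq, smul_eq_mul]
  have e : ((n + 1 : ℕ) : ℝ) - 1 = n := by push_cast; ring
  rw [e]
  have hN : {z | u z ≠ 0} ∈ nhds x :=
    (hc.continuousAt (isOpen_ball.mem_nhds (hsub hx))).eventually_ne hu
  have hp := sphere_pos n (1 / 2) (by norm_num) x hx _ hN
  have hs : 0 < (μH[(n : ℝ)] : Measure (EuclideanSpace ℝ (Fin (n + 1)))) (sphere 0 (1 / 2)) :=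
    hp.trans_le (measure_mono Set.inter_subset_right)
  refine mul_pos (inv_pos.2 (ENNReal.toReal_pos hs.ne' hfin.ne)) ?_
  rw [setIntegral_pos_iff_support_of_nonneg_ae]
  · convert hp using 3
    ext z; simp
  · exact Filter.Eventually.of_forall fun x => sq_nonneg _
  · obtain ⟨b, hb⟩ := (isCompact_sphere (0 : EuclideanSpace ℝ (Fin (n + 1))) (1 / 2)).exists_bound_of_continuousOn ((hc.mono hsub).pow 2)
    have hm : AEStronglyMeasurable (fun x => u x ^ 2)
        ((μH[(n : ℝ)] : Measure (EuclideanSpace ℝ (Fin (n + 1)))).restrict (sphere 0 (1 / 2))) :=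
      ((hc.mono hsub).pow 2).aestronglyMeasurable isClosed_sphere.measurableSet
    have : Fact ((μH[(n : ℝ)] : Measure (EuclideanSpace ℝ (Fin (n + 1)))) (sphere 0 (1 / 2)) < ⊤) := ⟨hfin⟩
    refine Integrable.of_bound hm b ?_
    · exact (ae_restrict_iff' isClosed_sphere.measurableSet).2 (Filter.Eventually.of_forall hb)

lemma sphAvg_nonneg {d : ℕ} (u : EuclideanSpace ℝ (Fin d) → ℝ) (r : ℝ) :
    0 ≤ sphAvg d (fun x => u x ^ 2) r := by
  unfold sphAvg
  rw [setAverage_eq, smul_eq_mul]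
  exact mul_nonneg (by positivity) (integral_nonneg fun x => sq_nonneg _)

lemma sphAvg_le {n : ℕ} (u : EuclideanSpace ℝ (Fin (n + 1)) → ℝ) (r : ℝ) (hr : 0 < r) (b : ℝ) (hb0 : 0 ≤ b)
    (hb : ∀ x ∈ sphere (0 : EuclideanSpace ℝ (Fin (n + 1))) r, u x ^ 2 ≤ b) :
    sphAvg (n + 1) (fun x => u x ^ 2) r ≤ b := by
  have hfin := sphere_finite n r hr
  unfold sphAvg
  rw [setAverage_eq, smul_eq_mul]
  have e : ((n + 1 : ℕ) : ℝ) - 1 = n := by push_cast; ring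
  rw [e]
  have := norm_setIntegral_le_of_norm_le_const (f := fun x => u x ^ 2) (C := b) hfin (fun x hx => by
    rw [Real.norm_of_nonneg (sq_nonneg _)]; exact hb x hx)
  have h2 := (le_abs_self _).trans this
  rw [inv_mul_eq_div]
  exact div_le_of_le_mul₀ (by positivity) hb0 h2

/-- If `u` is harmonic on `Ω ∩ B₁`, vanishes on `B₁ \ Ω` (zero extension), is nontrivial
near `0`, and its spherical doubling index satisfies `N_u(2^{-k}) ≤ M` for all `k`, then
`⨍_{B_r} u² ≥ c r^β` for all small `r`: `u` does not vanish to infinite order at `0`. -/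
theorem doubling_implies_polynomial_lower_bound (d : ℕ) (hd : 2 ≤ d)
    (Ω : Set (EuclideanSpace ℝ (Fin d))) (hΩ : IsOpen Ω)
    (u : EuclideanSpace ℝ (Fin d) → ℝ)
    (hcont : ContinuousOn u (ball (0 : EuclideanSpace ℝ (Fin d)) 1))
    (hreg : ContDiffOn ℝ 2 u (Ω ∩ ball (0 : EuclideanSpace ℝ (Fin d)) 1))
    (hharm : ∀ x ∈ Ω ∩ ball (0 : EuclideanSpace ℝ (Fin d)) 1, lap d u x = 0)
    (hzero : ∀ x ∈ ball (0 : EuclideanSpace ℝ (Fin d)) 1, x ∉ Ω → u x = 0)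
    (hnontriv : ∀ ε : ℝ, 0 < ε → ∃ x ∈ ball (0 : EuclideanSpace ℝ (Fin d)) ε, u x ≠ 0)
    (M : ℝ) (hM : 0 < M)
    (hdoubling : ∀ k : ℕ,
      sphAvg d (fun x => (u x) ^ 2) ((1 / 2 : ℝ) ^ k) ≤
        M * sphAvg d (fun x => (u x) ^ 2) (((1 / 2 : ℝ) ^ k) / 4)) :
    ∃ c > 0, ∃ β > 0, ∃ r₁ > 0, ∀ r ∈ Set.Ioo (0 : ℝ) r₁,
      c * r ^ β ≤ ballAvg d (fun x => (u x) ^ 2) r := by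
  obtain ⟨n, rfl⟩ : ∃ n, d = n + 1 := ⟨d - 1, by omega⟩
  have h : ∀ x ∈ ball (0 : EuclideanSpace ℝ (Fin (n + 1))) 1, u x ≠ 0 →
      ContDiffAt ℝ 2 u x ∧ lap (n + 1) u x = 0 := by
    intro x hx hne
    have hxΩ : x ∈ Ω := by by_contra hh; exact hne (hzero x hx hh)
    exact ⟨hreg.contDiffAt ((hΩ.inter isOpen_ball).mem_nhds ⟨hxΩ, hx⟩), hharm x ⟨hxΩ, hx⟩⟩
  obtain ⟨x₀, hx₀, hux₀⟩ := exists_sphere_ne (Nat.succ_ne_zero n) u hcont h (hnontriv _ (by norm_num))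
  have hpos := sphAvg_pos u hcont x₀ hx₀ hux₀
  set h₀ := sphAvg (n + 1) (fun x => u x ^ 2) (1 / 2) with hh₀
  obtain ⟨β₀, hβ₀⟩ := pow_unbounded_of_one_lt M (by norm_num : (1 : ℝ) < 4)
  set β := β₀ + 1 with hβ
  have hβ0 : 0 < β := Nat.succ_pos _
  set M' : ℝ := 4 ^ β with hM'
  have hMM : M ≤ M' := hβ₀.le.trans (pow_le_pow_right₀ (by norm_num) (Nat.le_succ _))
  have hM0 : 0 < M' := by positivity
  have hit : ∀ j : ℕ, h₀ ≤ M' ^ j * sphAvg (n + 1) (fun x => u x ^ 2) ((1 / 4) ^ j / 2) := by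
    intro j
    induction j with
    | zero => simp [hh₀]
    | succ j ih =>
      have hd := hdoubling (2 * j + 1)
      have e1 : ((1 / 2 : ℝ)) ^ (2 * j + 1) = (1 / 4) ^ j / 2 := by
        rw [pow_succ, pow_mul]; norm_num; ring
      have e2 : ((1 / 4 : ℝ) ^ j / 2) / 4 = (1 / 4) ^ (j + 1) / 2 := by
        rw [pow_succ]; ring
      rw [e1, e2] at hd
      have h1 := hd.trans (mul_le_mul_of_nonneg_right hMM (sphAvg_nonneg u _))
      calc h₀ ≤ _ := ih
        _ ≤ M' ^ j * (M' * sphAvg (n + 1) (fun x => u x ^ 2) ((1 / 4) ^ (j + 1) / 2)) := by gcongr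
        _ = _ := by ring
  obtain ⟨C, hC, hm⟩ := mvi (n + 1)
  set ω := (volume : Measure (EuclideanSpace ℝ (Fin (n + 1)))).real (ball 0 1) with hω
  have hω0 : 0 < ω := ENNReal.toReal_pos (measure_ball_pos _ _ one_pos).ne' measure_ball_lt_top.ne
  set D := C * ω * 8 ^ (n + 1) with hD
  have hD0 : 0 < D := by positivity
  refine ⟨h₀ / (M' * D), by positivity, β, hβ0, 1, one_pos, fun r hr => ?_⟩
  obtain ⟨hr0, hr1⟩ := hr
  obtain ⟨j, hj1, hj2⟩ := exists_nat_pow_near_of_lt_one hr0 hr1.le (by norm_num : (0:ℝ) < 1 / 4) (by norm_num)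
  set s : ℝ := (1 / 4) ^ (j + 1) / 2 with hs
  have hs0 : 0 < s := by positivity
  have h2s : 2 * s < r := by rw [hs]; linarith
  have hr8 : r ≤ 8 * s := by rw [hs, pow_succ]; linarith
  have hint : IntegrableOn (fun x => u x ^ 2) (ball 0 r) := by
    refine IntegrableOn.mono_set (t := closedBall 0 r) ?_ ball_subset_closedBall
    exact ((hcont.mono (closedBall_subset_ball hr1)).pow 2).integrableOn_compact (isCompact_closedBall _ _)
  have hvol : (volume : Measure (EuclideanSpace ℝ (Fin (n + 1)))).real (ball 0 r) = r ^ (n + 1) * ω := by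
    rw [hω, Measure.real, Measure.real, Measure.addHaar_ball _ _ hr0.le, ENNReal.toReal_mul,
      ENNReal.toReal_ofReal (by positivity)]
    simp
  have hA : ∫ x in ball 0 r, u x ^ 2 = r ^ (n + 1) * ω * ballAvg (n + 1) (fun x => u x ^ 2) r := by
    unfold ballAvg
    rw [setAverage_eq, smul_eq_mul, hvol, mul_inv_cancel_left₀ (by positivity)]
  set A := ballAvg (n + 1) (fun x => u x ^ 2) r with hAdef
  have hA0 : 0 ≤ A := by
    rw [hAdef, ballAvg, setAverage_eq, smul_eq_mul]
    exact mul_nonneg (by positivity) (integral_nonneg fun x => sq_nonneg _)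
  have hle : sphAvg (n + 1) (fun x => u x ^ 2) s ≤ D * A := by
    refine sphAvg_le u s hs0 _ (by positivity) fun y hy => ?_
    have hy' := mem_sphere_zero_iff_norm.1 hy
    have h1 := hm u 1 hcont h y s hs0 (by linarith)
    have hsub : ball y s ⊆ ball 0 r := by
      refine ball_subset_ball' ?_
      rw [dist_zero_right]; linarith
    have h2 : ∫ x in ball y s, u x ^ 2 ≤ ∫ x in ball 0 r, u x ^ 2 :=
      setIntegral_mono_set hint (Filter.Eventually.of_forall fun x => sq_nonneg _)
        (Filter.Eventually.of_forall hsub)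
    rw [hA] at h2
    have hsd : 0 < s ^ (n + 1) := by positivity
    refine le_of_mul_le_mul_right (?_ : _ * s ^ (n + 1) ≤ _ * s ^ (n + 1)) hsd
    calc u y ^ 2 * s ^ (n + 1) ≤ _ := h1
      _ ≤ C * (r ^ (n + 1) * ω * A) := by gcongr
      _ ≤ C * ((8 * s) ^ (n + 1) * ω * A) := by gcongr
      _ = D * A * s ^ (n + 1) := by rw [hD, mul_pow]; ring
  have hfin : M' ^ (j + 1) * r ^ β ≤ M' := by
    have e : M' ^ (j + 1) = ((4 : ℝ) ^ (j + 1)) ^ β := by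
      rw [hM', ← pow_mul, ← pow_mul, mul_comm]
    rw [e, ← mul_pow]
    refine pow_le_pow_left₀ (by positivity) ?_ β
    calc (4 : ℝ) ^ (j + 1) * r ≤ 4 ^ (j + 1) * (1 / 4) ^ j := by gcongr
      _ = 4 := by rw [pow_succ, mul_right_comm, ← mul_pow]; norm_num
  rw [div_mul_eq_mul_div, div_le_iff₀ (by positivity)]
  calc h₀ * r ^ β ≤ (M' ^ (j + 1) * (D * A)) * r ^ β := by
        gcongr
        exact (hit (j + 1)).trans (by gcongr)
    _ = (M' ^ (j + 1) * r ^ β) * (D * A) := by ring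
    _ ≤ M' * (D * A) := by gcongr
    _ = A * (M' * D) := by ring
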